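/- arXiv:2405.05664 — 2 statements merged into one kernel-verified Lean document; each statement's English description precedes it below -/
import Mathlib

section
/- (Uniform smallness on negativity intervals.) Let g : [0,∞) → [0,∞) be continuous and satisfy (g₊), let h ∈ L¹([a,b]) satisfy condition (h*) with m positivity intervals, and assume h ≢ 0 on every left neighborhood of σ_i and on every right neighborhood of τ_i. Let R > 0. Then for every ε > 0 there exists μ_ε > 0 such that for every μ > μ_ε and every positive solution u of (D_μ) with ‖u‖_∞ ≤ R, one has u(t) < ε for every t ∈ I_i⁻ and every i ∈ {1,…,m}. -/
/-!
On a negativity interval `[τ_i, σ_{i+1}]` a solution is convex, so it suffices to bound it at the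
two endpoints. At `τ_i`, the bound `0 ≤ u ≤ R` on `[a, τ_i]`, together with the fact that the
negative part of the weight can only increase `u'`, gives a lower bound for `u'(τ_i)` which does not
depend on `μ`. If `u(τ_i) ≥ ε`, then `u ≥ ε / 2` on some `[τ_i, s]` with `s` independent of `μ`, and
the equation forces `u'(s)` to grow linearly in `μ`. By convexity this is incompatible with
`0 ≤ u ≤ R` on `[s, σ_{i+1}]` as soon as `μ` is large. The endpoint `σ_{i+1}` is treated by
reflecting time, except for `σ_{m+1} = b`, where `u` vanishes.
-/

open Set MeasureTheory Filter Topology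

/-- Carathéodory solution of `u'' + F(t, u) = 0` on `[a,b]`. -/
def IsCaraSol (a b : ℝ) (F : ℝ → ℝ → ℝ) (u u' : ℝ → ℝ) : Prop :=
  (∀ t ∈ Set.Icc a b, HasDerivAt u (u' t) t) ∧
  IntervalIntegrable (fun s => F s (u s)) MeasureTheory.volume a b ∧
  ∀ t ∈ Set.Icc a b, u' t = u' a - ∫ s in a..t, F s (u s)

/-- The positive part `h⁺ = |h|/2 + h/2` of a weight function. -/
noncomputable def posW (h : ℝ → ℝ) : ℝ → ℝ := fun t => |h t| / 2 + h t / 2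

/-- The negative part `h⁻ = |h|/2 - h/2` of a weight function. -/
noncomputable def negW (h : ℝ → ℝ) : ℝ → ℝ := fun t => |h t| / 2 - h t / 2

section AlmostEverywhere

variable {x y : ℝ} {P : ℝ → Prop}

theorem lt_of_not_ae_restrict_Icc (hP : ¬ ∀ᵐ t ∂(volume.restrict (Icc x y)), P t) : x < y := by
  contrapose! hP
  rw [Measure.restrict_eq_zero.2 (by simp [hP])]
  simp

theorem ae_restrict_Icc_comp_neg (hP : ∀ᵐ t ∂(volume.restrict (Icc x y)), P t) :
    ∀ᵐ t ∂(volume.restrict (Icc (-y) (-x))), P (-t) := by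
  rw [ae_restrict_iff' measurableSet_Icc] at hP ⊢
  have hP_neg := (Measure.measurePreserving_neg volume).quasiMeasurePreserving.ae hP
  filter_upwards [hP_neg] with t ht hmem
  exact ht ⟨le_neg.2 hmem.2, neg_le.2 hmem.1⟩

end AlmostEverywhere

section Weights

variable {h : ℝ → ℝ} {a b t : ℝ}

theorem posW_nonneg (h : ℝ → ℝ) (t : ℝ) : 0 ≤ posW h t := by
  unfold posW; linarith [neg_abs_le (h t)]

theorem negW_nonneg (h : ℝ → ℝ) (t : ℝ) : 0 ≤ negW h t := by
  unfold negW; linarith [le_abs_self (h t)]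

theorem posW_of_nonpos (ht : h t ≤ 0) : posW h t = 0 := by
  unfold posW; linarith [abs_of_nonpos ht]

theorem negW_of_nonpos (ht : h t ≤ 0) : negW h t = -h t := by
  unfold negW; linarith [abs_of_nonpos ht]

theorem intervalIntegrable_posW (hh : IntervalIntegrable h volume a b) :
    IntervalIntegrable (posW h) volume a b :=
  (hh.abs.div_const 2).add (hh.div_const 2)

theorem intervalIntegrable_negW (hh : IntervalIntegrable h volume a b) :
    IntervalIntegrable (negW h) volume a b :=
  (hh.abs.div_const 2).sub (hh.div_const 2)

theorem integral_negW_pos (hh : IntervalIntegrable h volume a b)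
    (hneg : ∀ᵐ t ∂(volume.restrict (Icc a b)), h t ≤ 0)
    (hne : ¬ ∀ᵐ t ∂(volume.restrict (Icc a b)), h t = 0) :
    0 < ∫ t in a..b, negW h t := by
  have hab : a ≤ b := (lt_of_not_ae_restrict_Icc hne).le
  have h_nonneg : 0 ≤ ∫ t in a..b, negW h t :=
    intervalIntegral.integral_nonneg hab fun t _ => negW_nonneg h t
  refine h_nonneg.lt_of_ne' fun h_zero => ?_
  rw [intervalIntegral.integral_of_le hab, ← integral_Icc_eq_integral_Ioc] at h_zero
  have h_int : IntegrableOn (negW h) (Icc a b) :=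
    (intervalIntegrable_iff_integrableOn_Icc_of_le hab).1 (intervalIntegrable_negW hh)
  apply hne
  filter_upwards [(integral_eq_zero_iff_of_nonneg (negW_nonneg h) h_int).1 h_zero, hneg]
    with t ht_zero ht_neg
  rwa [Pi.zero_apply, negW_of_nonpos ht_neg, neg_eq_zero] at ht_zero

end Weights

theorem add_mul_sub_le_of_convexOn {S : Set ℝ} {f : ℝ → ℝ} {x y f' : ℝ} (hf : ConvexOn ℝ S f)
    (hx : x ∈ S) (hy : y ∈ S) (hderiv : HasDerivAt f f' x) : f x + f' * (y - x) ≤ f y := by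
  rcases lt_trichotomy x y with hxy | rfl | hyx
  · have h_slope := hf.le_slope_of_hasDerivAt hx hy hxy hderiv
    rw [slope_def_field, le_div_iff₀ (sub_pos.2 hxy)] at h_slope
    linarith
  · simp
  · have h_slope := hf.slope_le_of_hasDerivAt hy hx hyx hderiv
    rw [slope_def_field, div_le_iff₀ (sub_pos.2 hyx)] at h_slope
    linarith

section CaratheodorySolutions

variable {a b c d : ℝ} {F : ℝ → ℝ → ℝ} {u u' f : ℝ → ℝ}

theorem IsCaraSol.mono (hu : IsCaraSol a b F u u') (hac : a ≤ c) (hcd : c ≤ d) (hdb : d ≤ b) :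
    IsCaraSol c d F u u' := by
  obtain ⟨hderiv, hint, heq⟩ := hu
  have hsub {x y : ℝ} (hax : a ≤ x) (hxy : x ≤ y) (hyb : y ≤ b) :
      IntervalIntegrable (fun s => F s (u s)) volume x y := by
    refine hint.mono_set ?_
    rw [uIcc_of_le hxy, uIcc_of_le (hax.trans (hxy.trans hyb))]
    exact Icc_subset_Icc hax hyb
  refine ⟨fun t ht => hderiv t ⟨hac.trans ht.1, ht.2.trans hdb⟩, hsub hac hcd hdb, fun t ht => ?_⟩
  rw [heq t ⟨hac.trans ht.1, ht.2.trans hdb⟩, heq c ⟨hac, hcd.trans hdb⟩,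
    ← intervalIntegral.integral_add_adjacent_intervals (hsub le_rfl hac (hcd.trans hdb))
      (hsub hac ht.1 (ht.2.trans hdb))]
  ring

theorem IsCaraSol.deriv_sub (hu : IsCaraSol a b F u u') (hab : a ≤ b) :
    u' b - u' a = -∫ s in a..b, F s (u s) := by
  rw [hu.2.2 b (right_mem_Icc.2 hab)]
  ring

theorem IsCaraSol.comp_neg (hu : IsCaraSol a b F u u') :
    IsCaraSol (-b) (-a) (fun s x => F (-s) x) (fun t => u (-t)) (fun t => -u' (-t)) := by
  refine ⟨fun t ht => ?_, ?_, fun t ht => ?_⟩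
  · simpa [Function.comp_def] using
      (hu.1 (-t) ⟨le_neg.2 ht.2, neg_le.2 ht.1⟩).comp t (hasDerivAt_neg t)
  · exact ((IntervalIntegrable.iff_comp_neg (by finiteness)).1 hu.2.1).symm
  · have ht_le : -t ≤ b := neg_le.2 ht.1
    have h_incr := (hu.mono (le_neg.2 ht.2) ht_le le_rfl).deriv_sub ht_le
    simp only [intervalIntegral.integral_comp_neg (fun s => F s (u s)), neg_neg]
    linarith

theorem IsCaraSol.integral_le_deriv_sub (hu : IsCaraSol a b F u u') (hab : a ≤ b)
    (hf : IntervalIntegrable f volume a b)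
    (hle : ∀ᵐ t ∂(volume.restrict (Icc a b)), f t ≤ -F t (u t)) :
    ∫ t in a..b, f t ≤ u' b - u' a := by
  rw [hu.deriv_sub hab, ← intervalIntegral.integral_neg]
  exact intervalIntegral.integral_mono_ae_restrict hab hf hu.2.1.neg hle

theorem IsCaraSol.monotoneOn_deriv (hu : IsCaraSol a b F u u')
    (hF : ∀ᵐ t ∂(volume.restrict (Icc a b)), F t (u t) ≤ 0) : MonotoneOn u' (Icc a b) := by
  intro s hs t ht hst
  have h_incr := (hu.mono hs.1 hst ht.2).integral_le_deriv_sub (f := fun _ => 0) hst (by simp)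
    ((ae_restrict_of_ae_restrict_of_subset (Icc_subset_Icc hs.1 ht.2) hF).mono
      fun _ => neg_nonneg.2)
  simpa using h_incr

theorem IsCaraSol.convexOn (hu : IsCaraSol a b F u u')
    (hF : ∀ᵐ t ∂(volume.restrict (Icc a b)), F t (u t) ≤ 0) : ConvexOn ℝ (Icc a b) u := by
  refine MonotoneOn.convexOn_of_deriv (convex_Icc a b)
    (fun t ht => (hu.1 t ht).continuousAt.continuousWithinAt)
    (fun t ht => (hu.1 t (interior_subset ht)).differentiableAt.differentiableWithinAt)
    (((hu.monotoneOn_deriv hF).mono interior_subset).congr fun t ht => ?_)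
  exact (hu.1 t (interior_subset ht)).deriv.symm

end CaratheodorySolutions

/-- `u`, with derivative `u'`, is a solution of the equation
`u'' + (h⁺(t) - μ h⁻(t)) g(u) = 0` of `(D_μ)` on `[a, b]` such that `0 ≤ u ≤ R`. The boundary
conditions are left out, so that the notion is stable under restriction to subintervals. -/
structure IsBddSol (g h : ℝ → ℝ) (μ R a b : ℝ) (u u' : ℝ → ℝ) : Prop where
  isCaraSol : IsCaraSol a b (fun s x => (posW h s - μ * negW h s) * g x) u u'
  mapsTo : MapsTo u (Icc a b) (Icc 0 R)

section BoundedSolutions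

variable {g h u u' : ℝ → ℝ} {μ R G a b c d : ℝ}

theorem IsCaraSol.isBddSol_of_pos
    (hu : IsCaraSol a b (fun s x => (posW h s - μ * negW h s) * g x) u u') (hua : u a = 0)
    (hub : u b = 0) (hu_pos : ∀ t ∈ Ioo a b, 0 < u t) (hu_le : ∀ t ∈ Icc a b, |u t| ≤ R) :
    IsBddSol g h μ R a b u u' := by
  refine ⟨hu, fun t ht => ⟨?_, (le_abs_self _).trans (hu_le t ht)⟩⟩
  rcases eq_endpoints_or_mem_Ioo_of_mem_Icc ht with rfl | rfl | ht_Ioo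
  · exact hua.ge
  · exact hub.ge
  · exact (hu_pos t ht_Ioo).le

theorem IsBddSol.mono (hu : IsBddSol g h μ R a b u u') (hac : a ≤ c) (hcd : c ≤ d) (hdb : d ≤ b) :
    IsBddSol g h μ R c d u u' :=
  ⟨hu.isCaraSol.mono hac hcd hdb, hu.mapsTo.mono_left (Icc_subset_Icc hac hdb)⟩

theorem IsBddSol.comp_neg (hu : IsBddSol g h μ R a b u u') :
    IsBddSol g (fun t => h (-t)) μ R (-b) (-a) (fun t => u (-t)) (fun t => -u' (-t)) :=
  ⟨hu.isCaraSol.comp_neg, fun _ ht => hu.mapsTo ⟨le_neg.2 ht.2, neg_le.2 ht.1⟩⟩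

theorem IsBddSol.convexOn (hu : IsBddSol g h μ R a b u u') (hμ : 0 ≤ μ)
    (hg : ∀ x ∈ Icc 0 R, 0 ≤ g x) (hneg : ∀ᵐ t ∂(volume.restrict (Icc a b)), h t ≤ 0) :
    ConvexOn ℝ (Icc a b) u := by
  refine hu.isCaraSol.convexOn ?_
  filter_upwards [hneg, ae_restrict_mem measurableSet_Icc] with t ht htab
  rw [posW_of_nonpos ht, zero_sub]
  exact mul_nonpos_of_nonpos_of_nonneg (neg_nonpos.2 (mul_nonneg hμ (negW_nonneg h t)))
    (hg _ (hu.mapsTo htab))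

theorem IsBddSol.lt_of_mem_Icc {ε t : ℝ} (hu : IsBddSol g h μ R a b u u') (hμ : 0 ≤ μ)
    (hg : ∀ x ∈ Icc 0 R, 0 ≤ g x) (hneg : ∀ᵐ t ∂(volume.restrict (Icc a b)), h t ≤ 0)
    (hua : u a < ε) (hub : u b < ε) (ht : t ∈ Icc a b) : u t < ε :=
  have hab : a ≤ b := ht.1.trans ht.2
  (hu.convexOn hμ hg hneg).le_max_of_mem_Icc (left_mem_Icc.2 hab) (right_mem_Icc.2 hab) ht
    |>.trans_lt (max_lt hua hub)

theorem IsBddSol.neg_mul_integral_posW_le_deriv_sub (hu : IsBddSol g h μ R a b u u') (hab : a ≤ b)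
    (hμ : 0 ≤ μ) (hg : MapsTo g (Icc 0 R) (Icc 0 G)) (hh : IntervalIntegrable h volume a b) :
    -(G * ∫ t in a..b, posW h t) ≤ u' b - u' a := by
  rw [← neg_mul, ← intervalIntegral.integral_const_mul]
  refine hu.isCaraSol.integral_le_deriv_sub hab ((intervalIntegrable_posW hh).const_mul _) ?_
  filter_upwards [ae_restrict_mem measurableSet_Icc] with t ht
  obtain ⟨hg_nonneg, hg_le⟩ := hg (hu.mapsTo ht)
  have h_pos := mul_le_mul_of_nonneg_left hg_le (posW_nonneg h t)
  have h_neg := mul_nonneg (mul_nonneg hμ (negW_nonneg h t)) hg_nonneg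
  linarith

theorem IsBddSol.mul_integral_negW_le_deriv_sub {η : ℝ} (hu : IsBddSol g h μ R a b u u')
    (hab : a ≤ b) (hμ : 0 ≤ μ) (hη : ∀ t ∈ Icc a b, η ≤ g (u t))
    (hh : IntervalIntegrable h volume a b)
    (hneg : ∀ᵐ t ∂(volume.restrict (Icc a b)), h t ≤ 0) :
    μ * (η * ∫ t in a..b, negW h t) ≤ u' b - u' a := by
  rw [← mul_assoc, ← intervalIntegral.integral_const_mul]
  refine hu.isCaraSol.integral_le_deriv_sub hab ((intervalIntegrable_negW hh).const_mul _) ?_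
  filter_upwards [hneg, ae_restrict_mem measurableSet_Icc] with t ht htab
  rw [posW_of_nonpos ht]
  have h_le := mul_le_mul_of_nonneg_left (hη t htab) (mul_nonneg hμ (negW_nonneg h t))
  linarith

theorem IsBddSol.neg_le_deriv_right (hu : IsBddSol g h μ R a b u u') (hab : a < b) (hμ : 0 ≤ μ)
    (hg : MapsTo g (Icc 0 R) (Icc 0 G)) (hh : IntervalIntegrable h volume a b) :
    -(R / (b - a) + G * ∫ t in a..b, posW h t) ≤ u' b := by
  obtain ⟨c, hc, h_slope⟩ := exists_hasDerivAt_eq_slope u u' hab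
    (fun t ht => (hu.isCaraSol.1 t ht).continuousAt.continuousWithinAt)
    (fun t ht => hu.isCaraSol.1 t (Ioo_subset_Icc_self ht))
  have hua : u a ∈ Icc 0 R := hu.mapsTo (left_mem_Icc.2 hab.le)
  have hub : u b ∈ Icc 0 R := hu.mapsTo (right_mem_Icc.2 hab.le)
  have h_deriv_c : -(R / (b - a)) ≤ u' c := by
    rw [h_slope, ← neg_div]
    exact div_le_div_of_nonneg_right (by linarith [hua.2, hub.1]) (sub_pos.2 hab).le
  have hh_cb : IntervalIntegrable h volume c b :=
    hh.mono_set (uIcc_subset_uIcc_right (Icc_subset_uIcc (Ioo_subset_Icc_self hc)))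
  have h_incr : -(G * ∫ t in c..b, posW h t) ≤ u' b - u' c :=
    (hu.mono hc.1.le hc.2.le le_rfl).neg_mul_integral_posW_le_deriv_sub hc.2.le hμ hg hh_cb
  have h_mass : G * ∫ t in c..b, posW h t ≤ G * ∫ t in a..b, posW h t :=
    mul_le_mul_of_nonneg_left
      (intervalIntegral.integral_mono_interval hc.1.le hc.2.le le_rfl
        (Eventually.of_forall (posW_nonneg h)) (intervalIntegrable_posW hh))
      ((hg hua).1.trans (hg hua).2)
  linarith

theorem IsBddSol.mul_integral_negW_le {s K ε η : ℝ} (hu : IsBddSol g h μ R a b u u')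
    (has : a < s) (hsb : s < b) (hμ : 0 ≤ μ) (hg : ∀ x ∈ Icc 0 R, 0 ≤ g x)
    (hη : ∀ x ∈ Icc (ε / 2) R, η ≤ g x) (hh : IntervalIntegrable h volume a s)
    (hneg : ∀ᵐ t ∂(volume.restrict (Icc a b)), h t ≤ 0)
    (hε : 0 ≤ ε) (hK : -K ≤ u' a) (hKs : K * (s - a) ≤ ε / 2) (hua : ε ≤ u a) :
    μ * (η * ∫ t in a..s, negW h t) ≤ K + R / (b - s) := by
  have h_convex : ConvexOn ℝ (Icc a b) u := hu.convexOn hμ hg hneg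
  have ha_mem : a ∈ Icc a b := left_mem_Icc.2 (has.trans hsb).le
  have hb_mem : b ∈ Icc a b := right_mem_Icc.2 (has.trans hsb).le
  have hs_mem : s ∈ Icc a b := ⟨has.le, hsb.le⟩
  have h_large : ∀ t ∈ Icc a s, ε / 2 ≤ u t := by
    intro t ht
    have h_tangent := add_mul_sub_le_of_convexOn h_convex ha_mem (Icc_subset_Icc_right hsb.le ht)
      (hu.isCaraSol.1 a ha_mem)
    have h_drop : -(ε / 2) ≤ u' a * (t - a) := by
      rcases le_total 0 (u' a) with h_up | h_down
      · have h_rise := mul_nonneg h_up (sub_nonneg.2 ht.1)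
        linarith
      · calc -(ε / 2) ≤ -K * (s - a) := by linarith
          _ ≤ u' a * (s - a) := mul_le_mul_of_nonneg_right hK (sub_pos.2 has).le
          _ ≤ u' a * (t - a) := mul_le_mul_of_nonpos_left (by linarith [ht.2]) h_down
    linarith
  have h_deriv_s : u' s ≤ R / (b - s) := by
    rw [le_div_iff₀ (sub_pos.2 hsb)]
    have h_tangent := add_mul_sub_le_of_convexOn h_convex hs_mem hb_mem (hu.isCaraSol.1 s hs_mem)
    linarith [(hu.mapsTo hb_mem).2, (hu.mapsTo hs_mem).1]
  have h_incr : μ * (η * ∫ t in a..s, negW h t) ≤ u' s - u' a :=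
    (hu.mono le_rfl has.le hsb.le).mul_integral_negW_le_deriv_sub has.le hμ
      (fun t ht => hη _ ⟨h_large t ht, (hu.mapsTo (Icc_subset_Icc_right hsb.le ht)).2⟩) hh
      (ae_restrict_of_ae_restrict_of_subset (Icc_subset_Icc_right hsb.le) hneg)
  linarith

end BoundedSolutions

section Endpoints

variable {g h : ℝ → ℝ} {R a b q r ε : ℝ}

theorem nonneg_of_continuousOn_Ici (hg_cont : ContinuousOn g (Ici 0))
    (hg_pos : ∀ x > 0, 0 < g x) : ∀ x ∈ Ici (0 : ℝ), 0 ≤ g x := by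
  rw [← closure_Ioi] at hg_cont ⊢
  exact le_on_closure (fun x hx => (hg_pos x hx).le) continuousOn_const hg_cont

theorem exists_mapsTo_Icc_zero (hg_cont : ContinuousOn g (Ici 0)) (hg_pos : ∀ x > 0, 0 < g x)
    (R : ℝ) : ∃ G, MapsTo g (Icc 0 R) (Icc 0 G) := by
  have hg_cont_Icc : ContinuousOn g (Icc 0 R) := hg_cont.mono Icc_subset_Ici_self
  obtain ⟨G, hG⟩ := isCompact_Icc.bddAbove_image hg_cont_Icc
  exact ⟨G, fun x hx =>
    ⟨nonneg_of_continuousOn_Ici hg_cont hg_pos x hx.1, hG (mem_image_of_mem g hx)⟩⟩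

theorem exists_mem_Ioo_mul_sub_le (K : ℝ) (hε : 0 < ε) (hqr : q < r) :
    ∃ s ∈ Ioo q r, K * (s - q) ≤ ε := by
  have h_lim : Tendsto (fun s => K * (s - q)) (𝓝[>] q) (𝓝 0) :=
    ((by fun_prop : Continuous fun s => K * (s - q)).tendsto' q 0 (by simp)).mono_left
      nhdsWithin_le_nhds
  have h_mem : ∀ᶠ s in 𝓝[>] q, s ∈ Ioo q r := Ioo_mem_nhdsGT hqr
  exact (h_mem.and (h_lim.eventually_le_const hε)).exists

theorem eventually_lt_left_endpoint (hg_cont : ContinuousOn g (Ici 0))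
    (hg_pos : ∀ x > 0, 0 < g x) (hε : 0 < ε) (haq : a < q) (hqr : q < r) (hrb : r ≤ b)
    (hh : IntervalIntegrable h volume a b)
    (hneg : ∀ᵐ t ∂(volume.restrict (Icc q r)), h t ≤ 0)
    (hne : ∀ s ∈ Ioo q r, ¬ ∀ᵐ t ∂(volume.restrict (Icc q s)), h t = 0) :
    ∀ᶠ μ in atTop, ∀ u u' : ℝ → ℝ, IsBddSol g h μ R a b u u' → u q < ε := by
  obtain ⟨G, hG⟩ := exists_mapsTo_Icc_zero hg_cont hg_pos R
  obtain ⟨η, hη_pos, hη⟩ := (isCompact_Icc (a := ε / 2) (b := R)).exists_forall_le'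
    (hg_cont.mono fun x hx => (half_pos hε).le.trans hx.1)
    (fun x hx => hg_pos x ((half_pos hε).trans_le hx.1))
  set K := R / (q - a) + G * ∫ t in a..q, posW h t
  obtain ⟨s, hs, hKs⟩ := exists_mem_Ioo_mul_sub_le K (half_pos hε) hqr
  have hq_mem : q ∈ uIcc a b := Icc_subset_uIcc ⟨haq.le, hqr.le.trans hrb⟩
  have hs_mem : s ∈ uIcc a b := Icc_subset_uIcc ⟨(haq.trans hs.1).le, hs.2.le.trans hrb⟩
  have hh_aq : IntervalIntegrable h volume a q := hh.mono_set (uIcc_subset_uIcc_left hq_mem)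
  have hh_qs : IntervalIntegrable h volume q s := hh.mono_set (uIcc_subset_uIcc hq_mem hs_mem)
  have h_coef : 0 < η * ∫ t in q..s, negW h t :=
    mul_pos hη_pos <| integral_negW_pos hh_qs
      (ae_restrict_of_ae_restrict_of_subset (Icc_subset_Icc_right hs.2.le) hneg) (hne s hs)
  filter_upwards [eventually_gt_atTop ((K + R / (r - s)) / (η * ∫ t in q..s, negW h t)),
    eventually_ge_atTop 0] with μ hμ hμ_nonneg u u' hu
  by_contra! huq
  have hK : -K ≤ u' q :=
    (hu.mono le_rfl haq.le (hqr.le.trans hrb)).neg_le_deriv_right haq hμ_nonneg hG hh_aq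
  exact ((div_lt_iff₀ h_coef).1 hμ).not_ge <|
    (hu.mono haq.le hqr.le hrb).mul_integral_negW_le hs.1 hs.2 hμ_nonneg
      (fun x hx => (hG hx).1) hη hh_qs hneg hε.le hK hKs huq

theorem eventually_lt_right_endpoint (hg_cont : ContinuousOn g (Ici 0))
    (hg_pos : ∀ x > 0, 0 < g x) (hε : 0 < ε) (haq : a ≤ q) (hqr : q < r) (hrb : r < b)
    (hh : IntervalIntegrable h volume a b)
    (hneg : ∀ᵐ t ∂(volume.restrict (Icc q r)), h t ≤ 0)
    (hne : ∀ s ∈ Ioo q r, ¬ ∀ᵐ t ∂(volume.restrict (Icc s r)), h t = 0) :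
    ∀ᶠ μ in atTop, ∀ u u' : ℝ → ℝ, IsBddSol g h μ R a b u u' → u r < ε := by
  have hne_reflect : ∀ s ∈ Ioo (-r) (-q),
      ¬ ∀ᵐ t ∂(volume.restrict (Icc (-r) s)), h (-t) = 0 := by
    intro s hs h_zero
    apply hne (-s) ⟨lt_neg.1 hs.2, neg_lt.1 hs.1⟩
    simpa using ae_restrict_Icc_comp_neg h_zero
  have hh_reflect : IntervalIntegrable (fun t => h (-t)) volume (-b) (-a) :=
    ((IntervalIntegrable.iff_comp_neg (by finiteness)).1 hh).symm
  filter_upwards [eventually_lt_left_endpoint (R := R) hg_cont hg_pos hε (neg_lt_neg hrb)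
    (neg_lt_neg hqr) (neg_le_neg haq) hh_reflect (ae_restrict_Icc_comp_neg hneg) hne_reflect]
    with μ hμ u u' hu
  simpa using hμ _ _ hu.comp_neg

end Endpoints

section Intervals

variable {a b q r R ε : ℝ} {g h : ℝ → ℝ} {m : ℕ} {σ τ : ℕ → ℝ}

theorem eventually_forall_mem_Icc_lt (hg_cont : ContinuousOn g (Ici 0))
    (hg_pos : ∀ x > 0, 0 < g x) (hε : 0 < ε) (haq : a < q) (hqr : q < r) (hrb : r ≤ b)
    (hh : IntegrableOn h (Icc a b)) (hneg : ∀ᵐ t ∂(volume.restrict (Icc q r)), h t ≤ 0)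
    (hq_right : ∀ δ > (0 : ℝ),
      ¬ ∀ᵐ t ∂(volume.restrict (Icc q (q + δ) ∩ Icc a b)), h t = 0)
    (hr_left : r < b → ∀ δ > (0 : ℝ),
      ¬ ∀ᵐ t ∂(volume.restrict (Icc (r - δ) r ∩ Icc a b)), h t = 0) :
    ∀ᶠ μ in atTop, ∀ u u' : ℝ → ℝ, IsBddSol g h μ R a b u u' → u b = 0 →
      ∀ t ∈ Icc q r, u t < ε := by
  have hh_ab : IntervalIntegrable h volume a b :=
    (intervalIntegrable_iff_integrableOn_Icc_of_le (haq.trans_le (hqr.le.trans hrb)).le).2 hh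
  have h_left : ∀ᶠ μ in atTop, ∀ u u' : ℝ → ℝ, IsBddSol g h μ R a b u u' → u q < ε := by
    refine eventually_lt_left_endpoint hg_cont hg_pos hε haq hqr hrb hh_ab hneg fun s hs => ?_
    have h_inter := hq_right (s - q) (sub_pos.2 hs.1)
    rwa [add_sub_cancel, inter_eq_left.2
      (Icc_subset_Icc haq.le (hs.2.le.trans hrb))] at h_inter
  have h_right : ∀ᶠ μ in atTop, ∀ u u' : ℝ → ℝ,
      IsBddSol g h μ R a b u u' → u b = 0 → u r < ε := by
    rcases hrb.eq_or_lt with rfl | hrb_lt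
    · exact Eventually.of_forall fun μ u u' _ hub => hub.trans_lt hε
    refine (eventually_lt_right_endpoint hg_cont hg_pos hε haq.le hqr hrb_lt hh_ab hneg
      fun s hs => ?_).mono fun μ hμ u u' hu _ => hμ u u' hu
    have h_inter := hr_left hrb_lt (r - s) (sub_pos.2 hs.2)
    rwa [sub_sub_cancel, inter_eq_left.2
      (Icc_subset_Icc (haq.trans hs.1).le hrb)] at h_inter
  filter_upwards [h_left, h_right, eventually_ge_atTop 0]
    with μ hμ_left hμ_right hμ_nonneg u u' hu hub t ht
  exact (hu.mono haq.le hqr.le hrb).lt_of_mem_Icc hμ_nonneg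
    (fun x hx => nonneg_of_continuousOn_Ici hg_cont hg_pos x hx.1) hneg
    (hμ_left u u' hu) (hμ_right u u' hu hub) ht

theorem mem_Icc_of_interlacing (hστ : ∀ i, 1 ≤ i → i ≤ m → σ i < τ i)
    (hτσ : ∀ i, 1 ≤ i → i ≤ m → τ i < σ (i + 1)) :
    ∀ i ∈ Icc 1 (m + 1), σ i ∈ Icc (σ 1) (σ (m + 1)) := by
  have hσ_mono : MonotoneOn σ (Icc 1 (m + 1)) := by
    refine monotoneOn_of_le_add_one ordConnected_Icc fun i _ hi hi_succ => ?_
    have him : i ≤ m := Nat.le_of_succ_le_succ hi_succ.2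
    exact ((hστ i hi.1 him).trans (hτσ i hi.1 him)).le
  intro i hi
  have hm : 1 ≤ m + 1 := hi.1.trans hi.2
  exact ⟨hσ_mono (left_mem_Icc.2 hm) hi hi.1, hσ_mono hi (right_mem_Icc.2 hm) hi.2⟩

theorem uniform_smallness_on_negativity_intervals_general
    (hg_cont : ContinuousOn g (Ici 0)) (hg_pos : ∀ x > 0, 0 < g x)
    (hh : IntegrableOn h (Icc a b)) (hσ_first : a ≤ σ 1) (hσ_last : σ (m + 1) = b)
    (hστ : ∀ i, 1 ≤ i → i ≤ m → σ i < τ i)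
    (hτσ : ∀ i, 1 ≤ i → i < m → τ i < σ (i + 1))
    (hneg : ∀ i, 1 ≤ i → i ≤ m → ∀ᵐ t ∂(volume.restrict (Icc (τ i) (σ (i + 1)))), h t ≤ 0)
    (hσ_left : ∀ i, 1 ≤ i → i < m → ∀ δ > (0 : ℝ),
      ¬ ∀ᵐ t ∂(volume.restrict (Icc (σ (i + 1) - δ) (σ (i + 1)) ∩ Icc a b)), h t = 0)
    (hτ_right : ∀ i, 1 ≤ i → i ≤ m → ∀ δ > (0 : ℝ),
      ¬ ∀ᵐ t ∂(volume.restrict (Icc (τ i) (τ i + δ) ∩ Icc a b)), h t = 0)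
    (hε : 0 < ε) :
    ∃ με > (0 : ℝ), ∀ μ > με, ∀ u u' : ℝ → ℝ, IsBddSol g h μ R a b u u' → u b = 0 →
      ∀ i, 1 ≤ i → i ≤ m → ∀ t ∈ Icc (τ i) (σ (i + 1)), u t < ε := by
  have hτσ_all : ∀ i, 1 ≤ i → i ≤ m → τ i < σ (i + 1) := by
    intro i hi him
    rcases him.lt_or_eq with him_lt | rfl
    · exact hτσ i hi him_lt
    · have h_ends := hτ_right i hi le_rfl 1 one_pos
      rw [Icc_inter_Icc] at h_ends
      rw [hσ_last]
      exact (le_max_left _ _).trans_lt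
        ((lt_of_not_ae_restrict_Icc h_ends).trans_le (min_le_right _ _))
  have hσ_mem : ∀ i ∈ Icc 1 (m + 1), σ i ∈ Icc a b := fun i hi =>
    Icc_subset_Icc hσ_first hσ_last.le (mem_Icc_of_interlacing hστ hτσ_all i hi)
  have h_intervals : ∀ i ∈ Finset.Icc 1 m, ∀ᶠ μ in atTop, ∀ u u' : ℝ → ℝ,
      IsBddSol g h μ R a b u u' → u b = 0 → ∀ t ∈ Icc (τ i) (σ (i + 1)), u t < ε := by
    intro i hi
    obtain ⟨hi_pos, him⟩ := Finset.mem_Icc.1 hi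
    have haτ : a < τ i := (hσ_mem i ⟨hi_pos, by omega⟩).1.trans_lt (hστ i hi_pos him)
    have hσb : σ (i + 1) ≤ b := (hσ_mem (i + 1) ⟨by omega, by omega⟩).2
    refine eventually_forall_mem_Icc_lt hg_cont hg_pos hε haτ (hτσ_all i hi_pos him) hσb hh
      (hneg i hi_pos him) (hτ_right i hi_pos him) fun hσb_lt => ?_
    have hi_ne : i ≠ m := fun him_eq => hσb_lt.ne (him_eq ▸ hσ_last)
    exact hσ_left i hi_pos (him.lt_of_ne hi_ne)
  obtain ⟨M, hM⟩ := eventually_atTop.1 ((Filter.eventually_all_finset _).2 h_intervals)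
  exact ⟨max M 1, by positivity, fun μ hμ u u' hu hub i hi him =>
    hM μ ((le_max_left _ _).trans hμ.le) i (Finset.mem_Icc.2 ⟨hi, him⟩) u u' hu hub⟩

end Intervals

/-- **Uniform smallness on negativity intervals.** For every
`ε > 0` there exists `μ_ε > 0` such that for every `μ > μ_ε` every positive
solution `u` of `(D_μ)` with `‖u‖_∞ ≤ R` satisfies `u < ε` on every negativity
interval `I_i⁻`, `i ∈ {1,…,m}`. -/
theorem uniform_smallness_on_negativity_intervals
    (a b : ℝ) (hab : a < b)
    (g : ℝ → ℝ)
    (hg_cont : Continuous g)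
    (hg0 : g 0 = 0)
    (hg_pos : ∀ s > 0, 0 < g s)
    (hg_ext : ∀ s ≤ (0 : ℝ), g s = 0)
    (h : ℝ → ℝ)
    (hh_int : IntegrableOn h (Set.Icc a b))
    (m : ℕ) (hm : 1 ≤ m)
    (σ τ : ℕ → ℝ)
    (hτ0 : τ 0 = a) (hσlast : σ (m + 1) = b)
    (h0 : τ 0 ≤ σ 1) (hlast : τ m ≤ σ (m + 1))
    (hστ : ∀ i, 1 ≤ i → i ≤ m → σ i < τ i)
    (hτσ : ∀ i, 1 ≤ i → i < m → τ i < σ (i + 1))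
    (hpos : ∀ i, 1 ≤ i → i ≤ m →
      (∀ᵐ t ∂(volume.restrict (Set.Icc (σ i) (τ i))), 0 ≤ h t) ∧
      ¬ (∀ᵐ t ∂(volume.restrict (Set.Icc (σ i) (τ i))), h t = 0))
    (hneg : ∀ i, i ≤ m →
      (∀ᵐ t ∂(volume.restrict (Set.Icc (τ i) (σ (i + 1)))), h t ≤ 0) ∧
      (τ i < σ (i + 1) →
        ¬ (∀ᵐ t ∂(volume.restrict (Set.Icc (τ i) (σ (i + 1)))), h t = 0)))
    (hσleft : ∀ i, 1 ≤ i → i ≤ m → ∀ δ > (0 : ℝ),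
      ¬ (∀ᵐ t ∂(volume.restrict (Set.Icc (σ i - δ) (σ i) ∩ Set.Icc a b)), h t = 0))
    (hτright : ∀ i, 1 ≤ i → i ≤ m → ∀ δ > (0 : ℝ),
      ¬ (∀ᵐ t ∂(volume.restrict (Set.Icc (τ i) (τ i + δ) ∩ Set.Icc a b)), h t = 0))
    (R : ℝ) (hR : 0 < R) :
    ∀ ε > (0 : ℝ), ∃ με > (0 : ℝ), ∀ μ > με,
      ∀ u u' : ℝ → ℝ,
        IsCaraSol a b (fun s x => (posW h s - μ * negW h s) * g x) u u' →
        u a = 0 → u b = 0 → (∀ t ∈ Set.Ioo a b, 0 < u t) →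
        (∀ t ∈ Set.Icc a b, |u t| ≤ R) →
        ∀ i, 1 ≤ i → i ≤ m → ∀ t ∈ Set.Icc (τ i) (σ (i + 1)), u t < ε := by
  intro ε hε
  obtain ⟨με, hμε, hsmall⟩ := uniform_smallness_on_negativity_intervals_general (R := R)
    hg_cont.continuousOn hg_pos hh_int (hτ0 ▸ h0) hσlast hστ hτσ
    (fun i _ hi => (hneg i hi).1)
    (fun i _ hi => hσleft (i + 1) (Nat.le_add_left 1 i) hi) hτright hε
  exact ⟨με, hμε, fun μ hμ u u' hsol hua hub hu_pos hu_le =>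
    hsmall μ hμ u u' (hsol.isBddSol_of_pos hua hub hu_pos hu_le) hub⟩
end

section
/- (Sign and ratio transfer across an interval where the weight is non-positive.) Let c < d, let p ∈ L¹([c,d]) with p ≥ 0 a.e., and let w be a nontrivial Carathéodory solution on [c,d] of w'' = p(t) w. (i) If w(c) ≥ 0 and w'(c) ≥ 0, then w(d) ≥ w(c) and w'(d) ≥ w'(c). (ii) If w(c) ≤ 0 and w'(c) ≤ 0, then w(d) ≤ w(c) and w'(d) ≤ w'(c). (iii) In either case, if moreover |w(c)| ≤ γ |w'(c)| for some γ > 0, then w'(t) ≠ 0 for all t ∈ [c,d] and |w(d)| ≤ (γ + (d − c)) |w'(d)|. -/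
open Set MeasureTheory Filter Topology

/-- Carathéodory solution of `w'' = p(t) w` on `[c,d]`: `w'` is the derivative
of `w`, it is absolutely continuous, and the equation holds a.e. -/
def IsConvexSol (c d : ℝ) (p : ℝ → ℝ) (w w' : ℝ → ℝ) : Prop :=
  (∀ t ∈ Set.Icc c d, HasDerivAt w (w' t) t) ∧
  IntervalIntegrable (fun s => p s * w s) MeasureTheory.volume c d ∧
  ∀ t ∈ Set.Icc c d, w' t = w' c + ∫ s in c..t, p s * w s

/-! The theorem rests on a comparison principle: `0 ≤ w c` and `∫ s in c..t, p s * w s ≤ w' t`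
force `0 ≤ w`. With `P := ∫ s in c..d, p s`, let `ρ` be the minimum of `w / φ` for
`φ t := exp (P * (t - c))`. If `ρ < 0`, then `w ≥ ρ φ` gives `w' ≥ ρ P φ = (ρ φ)'`, so
`w - ρ φ` is monotone; but it is at least `-ρ > 0` at `c` and vanishes where the minimum is
attained.

Hence nonnegative data at `c` give `w ≥ 0`, so `w'` and then `w` increase and the ratio bound is the
mean value inequality. Comparison applied to both `w` and `-w` yields uniqueness, which excludes
`w' c = 0` in the ratio bound. The case of nonpositive data is that of `-w`. -/

lemma mul_integral_le_integral_mul {a b m : ℝ} {p f : ℝ → ℝ} {μ : Measure ℝ}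
    (hab : a ≤ b) (hp_int : IntervalIntegrable p μ a b)
    (hp : ∀ᵐ t ∂(μ.restrict (Icc a b)), 0 ≤ p t)
    (hpf : IntervalIntegrable (fun s => p s * f s) μ a b) (hm : ∀ s ∈ Icc a b, m ≤ f s) :
    m * ∫ s in a..b, p s ∂μ ≤ ∫ s in a..b, p s * f s ∂μ := by
  rw [mul_comm, ← intervalIntegral.integral_mul_const]
  refine intervalIntegral.integral_mono_ae_restrict hab (hp_int.mul_const m) hpf ?_
  filter_upwards [hp, ae_restrict_mem measurableSet_Icc] with s hps hs
  exact mul_le_mul_of_nonneg_left (hm s hs) hps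

lemma mul_integral_le_integral_mul_of_nonpos {c d t m : ℝ} {p f : ℝ → ℝ} {μ : Measure ℝ}
    (hp_int : IntervalIntegrable p μ c d)
    (hp : ∀ᵐ s ∂(μ.restrict (Icc c d)), 0 ≤ p s) (ht : t ∈ Icc c d)
    (hpf : IntervalIntegrable (fun s => p s * f s) μ c t) (hm : m ≤ 0)
    (hmf : ∀ s ∈ Icc c t, m ≤ f s) :
    m * ∫ s in c..d, p s ∂μ ≤ ∫ s in c..t, p s * f s ∂μ :=
  calc m * ∫ s in c..d, p s ∂μ
      ≤ m * ∫ s in c..t, p s ∂μ :=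
        mul_le_mul_of_nonpos_left
          (intervalIntegral.integral_mono_interval le_rfl ht.1 ht.2
            (ae_restrict_of_ae_restrict_of_subset Ioc_subset_Icc_self hp) hp_int) hm
    _ ≤ ∫ s in c..t, p s * f s ∂μ :=
        mul_integral_le_integral_mul ht.1
          (hp_int.mono_set (uIcc_subset_uIcc_left (Icc_subset_uIcc ht)))
          (ae_restrict_of_ae_restrict_of_subset (Icc_subset_Icc_right ht.2) hp) hpf hmf

lemma monotoneOn_sub_mul_exp {c d ρ : ℝ} {p w w' : ℝ → ℝ}
    (hp_int : IntervalIntegrable p volume c d)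
    (hp : ∀ᵐ s ∂(volume.restrict (Icc c d)), 0 ≤ p s) (hw : ContinuousOn w (Icc c d))
    (hw' : ∀ t ∈ Ioo c d, HasDerivAt w (w' t) t)
    (hle : ∀ t ∈ Ioo c d, ∫ s in c..t, p s * w s ≤ w' t) (hρ : ρ ≤ 0)
    (hρw : ∀ t ∈ Icc c d, ρ * Real.exp ((∫ s in c..d, p s) * (t - c)) ≤ w t) :
    MonotoneOn (fun t => w t - ρ * Real.exp ((∫ s in c..d, p s) * (t - c))) (Icc c d) := by
  set P := ∫ s in c..d, p s
  have hexp_deriv : ∀ t, HasDerivAt (fun t => Real.exp (P * (t - c)))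
      (Real.exp (P * (t - c)) * P) t := fun t => by
    simpa using (((hasDerivAt_id t).sub_const c).const_mul P).exp
  refine monotoneOn_of_hasDerivWithinAt_nonneg
    (f' := fun t => w' t - ρ * (Real.exp (P * (t - c)) * P))
    (convex_Icc c d) (hw.sub (by fun_prop)) ?_ ?_ <;> rw [interior_Icc]
  · exact fun t ht => ((hw' t ht).sub ((hexp_deriv t).const_mul ρ)).hasDerivWithinAt
  intro t ht
  have ht' : t ∈ Icc c d := Ioo_subset_Icc_self ht
  have hcd : c ≤ d := ht'.1.trans ht'.2
  have hP : 0 ≤ P := intervalIntegral.integral_nonneg_of_ae_restrict hcd hp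
  have hsub : uIcc c t ⊆ uIcc c d := uIcc_subset_uIcc_left (Icc_subset_uIcc ht')
  have hpw : IntervalIntegrable (fun s => p s * w s) volume c t :=
    (hp_int.mono_set hsub).mul_continuousOn (hw.mono (by rwa [uIcc_of_le hcd] at hsub))
  have hw_ge : ∀ s ∈ Icc c t, ρ * Real.exp (P * (t - c)) ≤ w s := fun s hs =>
    (mul_le_mul_of_nonpos_left (by gcongr; exact hs.2) hρ).trans
      (hρw s ⟨hs.1, hs.2.trans ht'.2⟩)
  rw [sub_nonneg, ← mul_assoc]
  exact (mul_integral_le_integral_mul_of_nonpos hp_int hp ht' hpw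
    (mul_nonpos_of_nonpos_of_nonneg hρ (Real.exp_nonneg _)) hw_ge).trans (hle t ht)

lemma exists_forall_mul_le_and_exists_eq {X : Type*} [TopologicalSpace X] {K : Set X}
    {f φ : X → ℝ} (hK : IsCompact K) (hne : K.Nonempty) (hf : ContinuousOn f K)
    (hφ : ContinuousOn φ K) (hφ_pos : ∀ x ∈ K, 0 < φ x) :
    ∃ ρ, (∀ x ∈ K, ρ * φ x ≤ f x) ∧ ∃ m ∈ K, ρ * φ m = f m := by
  obtain ⟨m, hm, hmin⟩ := hK.exists_isMinOn hne (hf.div hφ fun x hx => (hφ_pos x hx).ne')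
  exact ⟨f m / φ m, fun x hx => (le_div_iff₀ (hφ_pos x hx)).1 (hmin hx),
    m, hm, div_mul_cancel₀ _ (hφ_pos m hm).ne'⟩

theorem nonneg_of_integral_mul_le_deriv {c d : ℝ} {p w w' : ℝ → ℝ}
    (hp_int : IntervalIntegrable p volume c d)
    (hp : ∀ᵐ s ∂(volume.restrict (Icc c d)), 0 ≤ p s) (hw : ContinuousOn w (Icc c d))
    (hw' : ∀ t ∈ Ioo c d, HasDerivAt w (w' t) t)
    (hle : ∀ t ∈ Ioo c d, ∫ s in c..t, p s * w s ≤ w' t) (hc : 0 ≤ w c) :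
    ∀ t ∈ Icc c d, 0 ≤ w t := by
  intro t ht
  obtain ⟨ρ, hρw, m, hm, hρm⟩ := exists_forall_mul_le_and_exists_eq
    (φ := fun s => Real.exp ((∫ r in c..d, p r) * (s - c))) isCompact_Icc ⟨t, ht⟩ hw
    (by fun_prop) (fun s _ => Real.exp_pos _)
  suffices hρ : 0 ≤ ρ from (mul_nonneg hρ (Real.exp_nonneg _)).trans (hρw t ht)
  by_contra! hρ
  have hcm := monotoneOn_sub_mul_exp hp_int hp hw hw' hle hρ.le hρw
    (left_mem_Icc.2 (ht.1.trans ht.2)) hm hm.1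
  simp only [hρm, sub_self, mul_zero, Real.exp_zero, mul_one] at hcm
  linarith

namespace IsConvexSol

variable {c d : ℝ} {p w w' : ℝ → ℝ}

lemma continuousOn (h : IsConvexSol c d p w w') : ContinuousOn w (Icc c d) :=
  HasDerivAt.continuousOn h.1

lemma neg (h : IsConvexSol c d p w w') :
    IsConvexSol c d p (fun t => -w t) (fun t => -w' t) := by
  obtain ⟨hderiv, hint, heq⟩ := h
  refine ⟨fun t ht => (hderiv t ht).neg, ?_, fun t ht => ?_⟩
  · simp only [mul_neg]
    exact hint.neg
  · simp only [mul_neg, intervalIntegral.integral_neg, heq t ht, neg_add]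

lemma deriv_sub_deriv {x y : ℝ} (h : IsConvexSol c d p w w') (hx : x ∈ Icc c d)
    (hy : y ∈ Icc c d) : w' y - w' x = ∫ s in x..y, p s * w s := by
  obtain ⟨-, hint, heq⟩ := h
  have hint_to : ∀ z ∈ Icc c d, IntervalIntegrable (fun s => p s * w s) volume c z :=
    fun z hz => hint.mono_set (uIcc_subset_uIcc_left (Icc_subset_uIcc hz))
  rw [heq x hx, heq y hy, add_sub_add_left_eq_sub,
    intervalIntegral.integral_interval_sub_left (hint_to y hy) (hint_to x hx)]

lemma nonneg (h : IsConvexSol c d p w w') (hp_int : IntegrableOn p (Icc c d))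
    (hp : ∀ᵐ s ∂(volume.restrict (Icc c d)), 0 ≤ p s) (hw : 0 ≤ w c) (hw' : 0 ≤ w' c) :
    ∀ t ∈ Icc c d, 0 ≤ w t := fun t ht =>
  nonneg_of_integral_mul_le_deriv
    ((intervalIntegrable_iff_integrableOn_Icc_of_le (ht.1.trans ht.2)).2 hp_int) hp h.continuousOn
    (fun s hs => h.1 s (Ioo_subset_Icc_self hs))
    (fun s hs => by rw [h.2.2 s (Ioo_subset_Icc_self hs)]; exact le_add_of_nonneg_left hw')
    hw t ht

lemma eq_zero (h : IsConvexSol c d p w w') (hp_int : IntegrableOn p (Icc c d))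
    (hp : ∀ᵐ s ∂(volume.restrict (Icc c d)), 0 ≤ p s) (hw : w c = 0) (hw' : w' c = 0) :
    ∀ t ∈ Icc c d, w t = 0 := fun t ht =>
  le_antisymm
    (neg_nonneg.1 (h.neg.nonneg hp_int hp (neg_nonneg.2 hw.le) (neg_nonneg.2 hw'.le) t ht))
    (h.nonneg hp_int hp hw.ge hw'.ge t ht)

lemma monotoneOn_deriv (h : IsConvexSol c d p w w')
    (hp : ∀ᵐ s ∂(volume.restrict (Icc c d)), 0 ≤ p s) (hw : ∀ t ∈ Icc c d, 0 ≤ w t) :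
    MonotoneOn w' (Icc c d) := by
  intro x hx y hy hxy
  have hsub : Icc x y ⊆ Icc c d := Icc_subset_Icc hx.1 hy.2
  rw [← sub_nonneg, h.deriv_sub_deriv hx hy]
  refine intervalIntegral.integral_nonneg_of_ae_restrict hxy ?_
  filter_upwards [ae_restrict_of_ae_restrict_of_subset hsub hp,
    ae_restrict_mem measurableSet_Icc] with s hps hs
  exact mul_nonneg hps (hw s (hsub hs))

lemma monotoneOn (h : IsConvexSol c d p w w') (hw' : ∀ t ∈ Icc c d, 0 ≤ w' t) :
    MonotoneOn w (Icc c d) :=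
  monotoneOn_of_hasDerivWithinAt_nonneg (convex_Icc c d) h.continuousOn
    (fun t ht => (h.1 t (interior_subset ht)).hasDerivWithinAt)
    fun t ht => hw' t (interior_subset ht)

lemma sub_le_deriv_mul (h : IsConvexSol c d p w w') (hcd : c ≤ d)
    (hw' : MonotoneOn w' (Icc c d)) : w d - w c ≤ w' d * (d - c) := by
  have hd : d ∈ Icc c d := right_mem_Icc.2 hcd
  refine (convex_Icc c d).image_sub_le_mul_sub_of_deriv_le h.continuousOn
    (fun t ht => (h.1 t (interior_subset ht)).differentiableAt.differentiableWithinAt)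
    (fun t ht => ?_) c (left_mem_Icc.2 hcd) d hd hcd
  have ht' : t ∈ Icc c d := interior_subset ht
  exact (h.1 t ht').deriv.trans_le (hw' ht' hd ht'.2)

lemma deriv_left_pos {γ : ℝ} (h : IsConvexSol c d p w w') (hp_int : IntegrableOn p (Icc c d))
    (hp : ∀ᵐ s ∂(volume.restrict (Icc c d)), 0 ≤ p s) (hnt : ¬ ∀ t ∈ Icc c d, w t = 0)
    (hw : 0 ≤ w c) (hw' : 0 ≤ w' c) (hγ : w c ≤ γ * w' c) : 0 < w' c := by
  refine hw'.lt_of_ne' fun hw'_zero => hnt (h.eq_zero hp_int hp ?_ hw'_zero)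
  rw [hw'_zero, mul_zero] at hγ
  exact le_antisymm hγ hw

lemma monotoneOn_and_monotoneOn_deriv (h : IsConvexSol c d p w w')
    (hp_int : IntegrableOn p (Icc c d))
    (hp : ∀ᵐ s ∂(volume.restrict (Icc c d)), 0 ≤ p s) (hw : 0 ≤ w c) (hw' : 0 ≤ w' c) :
    MonotoneOn w (Icc c d) ∧ MonotoneOn w' (Icc c d) := by
  have hmono' : MonotoneOn w' (Icc c d) := h.monotoneOn_deriv hp (h.nonneg hp_int hp hw hw')
  exact ⟨h.monotoneOn fun t ht =>
    hw'.trans (hmono' (left_mem_Icc.2 (ht.1.trans ht.2)) ht ht.1), hmono'⟩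

lemma le_right_of_nonneg (h : IsConvexSol c d p w w') (hcd : c ≤ d)
    (hp_int : IntegrableOn p (Icc c d))
    (hp : ∀ᵐ s ∂(volume.restrict (Icc c d)), 0 ≤ p s) (hw : 0 ≤ w c) (hw' : 0 ≤ w' c) :
    w c ≤ w d ∧ w' c ≤ w' d := by
  obtain ⟨hmono, hmono'⟩ := h.monotoneOn_and_monotoneOn_deriv hp_int hp hw hw'
  have hc : c ∈ Icc c d := left_mem_Icc.2 hcd
  have hd : d ∈ Icc c d := right_mem_Icc.2 hcd
  exact ⟨hmono hc hd hcd, hmono' hc hd hcd⟩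

lemma deriv_ne_zero_and_abs_le_mul_abs_deriv {γ : ℝ} (h : IsConvexSol c d p w w') (hcd : c ≤ d)
    (hp_int : IntegrableOn p (Icc c d))
    (hp : ∀ᵐ s ∂(volume.restrict (Icc c d)), 0 ≤ p s) (hnt : ¬ ∀ t ∈ Icc c d, w t = 0)
    (hw : 0 ≤ w c) (hw' : 0 ≤ w' c) (hγ : 0 ≤ γ) (hratio : |w c| ≤ γ * |w' c|) :
    (∀ t ∈ Icc c d, w' t ≠ 0) ∧ |w d| ≤ (γ + (d - c)) * |w' d| := by
  rw [abs_of_nonneg hw, abs_of_nonneg hw'] at hratio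
  have hmono' := (h.monotoneOn_and_monotoneOn_deriv hp_int hp hw hw').2
  have hw'_pos : 0 < w' c := h.deriv_left_pos hp_int hp hnt hw hw' hratio
  obtain ⟨hwcd, hw'cd⟩ := h.le_right_of_nonneg hcd hp_int hp hw hw'
  refine ⟨fun t ht => (hw'_pos.trans_le (hmono' (left_mem_Icc.2 hcd) ht ht.1)).ne', ?_⟩
  rw [abs_of_nonneg (hw.trans hwcd), abs_of_nonneg (hw'.trans hw'cd)]
  calc w d ≤ w c + w' d * (d - c) := sub_le_iff_le_add'.1 (h.sub_le_deriv_mul hcd hmono')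
    _ ≤ γ * w' d + w' d * (d - c) := by
      gcongr
      exact hratio.trans (mul_le_mul_of_nonneg_left hw'cd hγ)
    _ = (γ + (d - c)) * w' d := by ring

end IsConvexSol

/-- **Sign and ratio transfer across an interval where the weight
is non-positive.** For `p ≥ 0` a.e. and `w` a nontrivial solution of
`w'' = p(t) w` on `[c,d]`:
(i) if `w(c) ≥ 0` and `w'(c) ≥ 0` then `w(d) ≥ w(c)` and `w'(d) ≥ w'(c)`;
(ii) if `w(c) ≤ 0` and `w'(c) ≤ 0` then `w(d) ≤ w(c)` and `w'(d) ≤ w'(c)`;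
(iii) in either case, if `|w(c)| ≤ γ |w'(c)|` for some `γ > 0`, then `w' ≠ 0`
on `[c,d]` and `|w(d)| ≤ (γ + (d-c)) |w'(d)|`. -/
theorem sign_and_ratio_transfer
    (c d : ℝ) (hcd : c < d)
    (p : ℝ → ℝ)
    (hp_int : IntegrableOn p (Set.Icc c d))
    (hp_nonneg : ∀ᵐ t ∂(volume.restrict (Set.Icc c d)), 0 ≤ p t)
    (w w₁ : ℝ → ℝ)
    (hw_sol : IsConvexSol c d p w w₁)
    (hw_nt : ¬ ∀ t ∈ Set.Icc c d, w t = 0) :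
    ((0 ≤ w c → 0 ≤ w₁ c → w c ≤ w d ∧ w₁ c ≤ w₁ d) ∧
     (w c ≤ 0 → w₁ c ≤ 0 → w d ≤ w c ∧ w₁ d ≤ w₁ c)) ∧
    (∀ γ > (0 : ℝ),
      ((0 ≤ w c ∧ 0 ≤ w₁ c) ∨ (w c ≤ 0 ∧ w₁ c ≤ 0)) →
      |w c| ≤ γ * |w₁ c| →
      (∀ t ∈ Set.Icc c d, w₁ t ≠ 0) ∧ |w d| ≤ (γ + (d - c)) * |w₁ d|) := by
  have hneg := hw_sol.neg
  refine ⟨⟨hw_sol.le_right_of_nonneg hcd.le hp_int hp_nonneg, fun h0 h1 => ?_⟩, ?_⟩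
  · simpa only [neg_le_neg_iff] using hneg.le_right_of_nonneg hcd.le hp_int hp_nonneg
      (neg_nonneg.2 h0) (neg_nonneg.2 h1)
  · rintro γ hγ (⟨h0, h1⟩ | ⟨h0, h1⟩) hratio
    · exact hw_sol.deriv_ne_zero_and_abs_le_mul_abs_deriv hcd.le hp_int hp_nonneg hw_nt h0 h1
        hγ.le hratio
    · simpa only [neg_ne_zero, abs_neg] using
        hneg.deriv_ne_zero_and_abs_le_mul_abs_deriv hcd.le hp_int hp_nonneg
          (by simpa only [neg_eq_zero] using hw_nt) (neg_nonneg.2 h0) (neg_nonneg.2 h1) hγ.le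
          (by simpa only [abs_neg] using hratio)
end
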